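/- (Formula (6) and skew-symmetry of ∇J) Let n ∈ Im(Ca') with g(n,n) = 1, and for A, B ∈ Im(Ca') tangent at n (g(A,n) = g(B,n) = 0) define (∇_A J)B := A×B − g(A×B, n)·n (the covariant derivative of the Cayley almost complex structure J X := n×X on S^{2,4}, obtained by orthogonal projection of A×B to the tangent space). Then (∇_A J)A = 0 for every tangent A (the nearly pseudo-Kähler property), and (∇_{JA} J)B = −J((∇_A J)B) for all tangent A, B. -/

import Mathlib

-- The split octonion algebra Ca' as pairs of real quaternions.
noncomputable section

abbrev Ca : Type := Quaternion ℝ × Quaternion ℝ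

namespace Ca

/-- Split octonion multiplication: (a,b)·(c,d) = (ac + (conj d)b, da + b(conj c)). -/
def mul (x y : Ca) : Ca :=
  (x.1 * y.1 + star y.2 * x.2, y.2 * x.1 + x.2 * star y.1)

/-- The unit (1,0). -/
def one : Ca := (1, 0)

/-- Conjugation conj(a,b) = (conj a, −b). -/
def conj (x : Ca) : Ca := (star x.1, -x.2)

/-- Real part Re(a,b) = re a. -/
def re (x : Ca) : ℝ := x.1.re

/-- Norm form N(a,b) = ‖a‖² − ‖b‖², of signature (4,4). -/
def N (x : Ca) : ℝ := Quaternion.normSq x.1 - Quaternion.normSq x.2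

/-- The symmetric bilinear form ⟨x,y⟩ = (N(x+y) − N(x) − N(y))/2. -/
def bil (x y : Ca) : ℝ := (N (x + y) - N x - N y) / 2

/-- The vector cross product on Im(Ca'): X × Y := X·Y + g(X,Y)·1. -/
def cross (X Y : Ca) : Ca := mul X Y + bil X Y • one

end Ca

/-- The covariant derivative of the Cayley almost complex structure on S^{2,4}:
(∇_A J)B = A×B − g(A×B,n)·n. -/
def nablaJ (n A B : Ca) : Ca := Ca.cross A B - Ca.bil (Ca.cross A B) n • n

/-- The Cayley almost complex structure J X = n×X. -/
def Jmap (n X : Ca) : Ca := Ca.cross n X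

/-!
For imaginary `x`, the composition law `conj x · (x · y) = N(x) y` becomes
`x · (x · y) = -g(x,x) y`. It yields `x × x = 0`, hence skew-symmetry of `×` and `(∇_A J)A = 0`,
and also `x × (x × y) = g(x,y) x - g(x,x) y`. Polarizing the latter in `x` computes `(n × A) × B`:
for `A`, `B` tangent at `n` it is `-n × (A × B) - g(A,B) n`. Since `n × (A × B)` is orthogonal to
`n`, the tangential part is the first term, so `(∇_{JA} J)B = -n × (A × B)`; this is
`-J((∇_A J)B)` because `J` kills the normal component.
-/

namespace Ca

open scoped Quaternion InnerProductSpace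

variable {x y z : Ca}

theorem bil_eq_inner_sub_inner (x y : Ca) : bil x y = ⟪x.1, y.1⟫_ℝ - ⟪x.2, y.2⟫_ℝ := by
  simp only [bil, N, ← Quaternion.inner_self, Prod.fst_add, Prod.snd_add, real_inner_add_add_self]
  ring

theorem bil_comm (x y : Ca) : bil x y = bil y x := by
  simp only [bil_eq_inner_sub_inner, real_inner_comm]

theorem bil_self (x : Ca) : bil x x = N x := by
  simp only [bil_eq_inner_sub_inner, Quaternion.inner_self, N]

/-- The form `bil`, bundled as a bilinear form. -/
def bilForm : LinearMap.BilinForm ℝ Ca :=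
  (innerₗ ℍ).compl₁₂ (LinearMap.fst ℝ ℍ ℍ) (LinearMap.fst ℝ ℍ ℍ) -
    (innerₗ ℍ).compl₁₂ (LinearMap.snd ℝ ℍ ℍ) (LinearMap.snd ℝ ℍ ℍ)

theorem bilForm_apply (x y : Ca) : bilForm x y = bil x y :=
  (bil_eq_inner_sub_inner x y).symm

/-- The multiplication `mul`, bundled as a bilinear map. -/
def mulBilin : Ca →ₗ[ℝ] Ca →ₗ[ℝ] Ca :=
  LinearMap.mk₂ ℝ mul
    (fun x x' y ↦ by ext1 <;> simp only [mul, Prod.fst_add, Prod.snd_add] <;> noncomm_ring)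
    (fun c x y ↦ by simp [mul])
    (fun x y y' ↦ by
      ext1 <;> simp only [mul, Prod.fst_add, Prod.snd_add, star_add] <;> noncomm_ring)
    (fun c x y ↦ by simp [mul])

theorem mulBilin_apply (x y : Ca) : mulBilin x y = mul x y :=
  rfl

/-- The cross product `cross`, bundled as a bilinear map. -/
def crossBilin : Ca →ₗ[ℝ] Ca →ₗ[ℝ] Ca :=
  mulBilin + bilForm.compr₂ (LinearMap.toSpanSingleton ℝ Ca one)

theorem crossBilin_apply (x y : Ca) : crossBilin x y = cross x y := by
  simp [crossBilin, mulBilin_apply, bilForm_apply, cross]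

theorem re_add_eq_zero (hx : re x = 0) (hy : re y = 0) : re (x + y) = 0 := by
  rw [re, Prod.fst_add, Quaternion.re_add, ← re, ← re, hx, hy, add_zero]

protected theorem mul_one (x : Ca) : mul x one = x := by
  simp [mul, one]

theorem conj_eq_neg (hx : re x = 0) : conj x = -x := by
  have hstar : star x.1 = -x.1 := Quaternion.star_eq_neg.mpr hx
  simp only [conj, hstar, ← Prod.neg_mk]

theorem re_mul (x y : Ca) : re (mul x y) = bil x (conj y) := by
  simp only [re, mul, conj, bil_eq_inner_sub_inner, Quaternion.inner_def, Quaternion.re_add,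
    Quaternion.re_mul, Quaternion.re_star, Quaternion.imI_star, Quaternion.imJ_star,
    Quaternion.imK_star, star_neg, Quaternion.re_neg, star_star, mul_neg]
  ring

theorem conj_mul_mul (x y : Ca) : mul (conj x) (mul x y) = N x • y := by
  obtain ⟨a, b⟩ := x
  obtain ⟨c, d⟩ := y
  ext1
  · calc star a * (a * c + star d * b) + star (d * a + b * star c) * -b
        = star a * a * c - c * (star b * b) := by
          simp only [star_add, star_mul, star_star]
          noncomm_ring
      _ = N (a, b) • c := by
          rw [Quaternion.star_mul_self, Quaternion.star_mul_self, Quaternion.coe_mul_eq_smul,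
            Quaternion.mul_coe_eq_smul, ← sub_smul, N]
  · calc (d * a + b * star c) * star a + -b * star (a * c + star d * b)
        = d * (a * star a) - b * star b * d := by
          simp only [star_add, star_mul, star_star]
          noncomm_ring
      _ = N (a, b) • d := by
          rw [Quaternion.self_mul_star, Quaternion.self_mul_star, Quaternion.mul_coe_eq_smul,
            Quaternion.coe_mul_eq_smul, ← sub_smul, N]

theorem mul_mul_self_left (hx : re x = 0) (y : Ca) : mul x (mul x y) = -(bil x x • y) := by
  rw [bil_self, ← conj_mul_mul, conj_eq_neg hx]
  simp only [← mulBilin_apply, map_neg, LinearMap.neg_apply, neg_neg]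

theorem re_mul_eq_neg_bil (x : Ca) (hy : re y = 0) : re (mul x y) = -bil x y := by
  rw [re_mul, conj_eq_neg hy, ← bilForm_apply, map_neg, bilForm_apply]

theorem re_cross (x : Ca) (hy : re y = 0) : re (cross x y) = 0 := by
  calc re (cross x y) = re (mul x y) + bil x y := by simp [re, cross, one]
    _ = 0 := by rw [re_mul_eq_neg_bil x hy, neg_add_cancel]

theorem cross_self (hx : re x = 0) : cross x x = 0 := by
  have hsq : mul x x = -(bil x x • one) := by
    simpa only [Ca.mul_one] using mul_mul_self_left hx one
  rw [cross, hsq, neg_add_cancel]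

theorem cross_swap (hx : re x = 0) (hy : re y = 0) : cross y x = -cross x y := by
  have hxy : cross x x + cross y x + (cross x y + cross y y) = 0 := by
    rw [← cross_self (re_add_eq_zero hx hy)]
    simp only [← crossBilin_apply, map_add, LinearMap.add_apply]
  rw [cross_self hx, cross_self hy, zero_add, add_zero] at hxy
  exact eq_neg_of_add_eq_zero_left hxy

theorem mul_self_cross (hx : re x = 0) (y : Ca) :
    mul x (cross x y) = bil x y • x - bil x x • y := by
  calc mul x (cross x y) = mul x (mul x y) + bil x y • mul x one := by
        simp only [cross, ← mulBilin_apply, map_add, map_smul]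
    _ = bil x y • x - bil x x • y := by
        rw [mul_mul_self_left hx, Ca.mul_one, neg_add_eq_sub]

theorem bil_self_cross (hx : re x = 0) (hy : re y = 0) : bil x (cross x y) = 0 := by
  have hre : re (mul x (cross x y)) = 0 := by
    calc re (mul x (cross x y)) = bil x y * re x - bil x x * re y := by
          rw [mul_self_cross hx]
          rfl
      _ = 0 := by rw [hx, hy, mul_zero, mul_zero, sub_zero]
  rw [← neg_eq_zero, ← re_mul_eq_neg_bil x (re_cross x hy), hre]

theorem cross_self_cross (hx : re x = 0) (hy : re y = 0) :
    cross x (cross x y) = bil x y • x - bil x x • y := by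
  rw [cross, mul_self_cross hx, bil_self_cross hx hy, zero_smul, add_zero]

theorem cross_cross_add_cross_cross (hx : re x = 0) (hy : re y = 0) (hz : re z = 0) :
    cross x (cross y z) + cross y (cross x z) =
      bil x z • y + bil y z • x - (2 * bil x y) • z := by
  have hexpand : cross x (cross y z) + cross y (cross x z) =
      cross (x + y) (cross (x + y) z) - cross x (cross x z) - cross y (cross y z) := by
    simp only [← crossBilin_apply, map_add, LinearMap.add_apply]
    abel
  have hbil : bil (x + y) z = bil x z + bil y z := by
    simp only [← bilForm_apply, map_add, LinearMap.add_apply]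
  have hnorm : bil (x + y) (x + y) = bil x x + 2 * bil x y + bil y y := by
    rw [bil_self, bil_self, bil_self, bil]
    ring
  rw [hexpand, cross_self_cross (re_add_eq_zero hx hy) hz, cross_self_cross hx hz,
    cross_self_cross hy hz, hbil, hnorm]
  module

theorem cross_cross_left (hx : re x = 0) (hy : re y = 0) (hz : re z = 0) :
    cross (cross x y) z =
      -cross x (cross y z) + (2 * bil x z) • y - bil x y • z - bil y z • x := by
  have hpolar : cross z (cross x y) + cross x (cross z y) =
      bil y z • x + bil x y • z - (2 * bil x z) • y := by
    rw [cross_cross_add_cross_cross hz hx hy, bil_comm z y, bil_comm z x]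
  have hinner : cross x (cross z y) = -cross x (cross y z) := by
    simp only [cross_swap hy hz, ← crossBilin_apply, map_neg]
  rw [cross_swap hz (re_cross x hy), eq_sub_of_add_eq hpolar, hinner]
  abel

end Ca

section

open Ca

variable {n A B : Ca}

theorem nablaJ_self (n : Ca) (hA : re A = 0) : nablaJ n A A = 0 := by
  rw [nablaJ, cross_self hA, ← bilForm_apply, map_zero, LinearMap.zero_apply, zero_smul, sub_zero]

theorem Jmap_nablaJ (hn : re n = 0) (A B : Ca) :
    Jmap n (nablaJ n A B) = cross n (cross A B) := by
  have hnn : crossBilin n n = 0 := by rw [crossBilin_apply, cross_self hn]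
  rw [Jmap, nablaJ, ← crossBilin_apply, map_sub, map_smul, hnn, smul_zero, sub_zero,
    crossBilin_apply]

theorem nablaJ_Jmap (hn : re n = 0) (hnn : bil n n = 1) (hA : re A = 0) (hB : re B = 0)
    (hAn : bil A n = 0) (hBn : bil B n = 0) :
    nablaJ n (Jmap n A) B = -cross n (cross A B) := by
  have hcross : cross (cross n A) B = -cross n (cross A B) - bil A B • n := by
    rw [cross_cross_left hn hA hB, bil_comm n A, bil_comm n B, hAn, hBn]
    module
  have htangent : bil n (cross n (cross A B)) = 0 := bil_self_cross hn (re_cross A hB)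
  have hnormal : bil (cross (cross n A) B) n = -bil A B := by
    calc bil (cross (cross n A) B) n
        = -bil n (cross n (cross A B)) - bil A B * bil n n := by
          simp only [bil_comm _ n, hcross, ← bilForm_apply, map_sub, map_neg, map_smul,
            smul_eq_mul]
      _ = -bil A B := by rw [htangent, hnn, neg_zero, zero_sub, mul_one]
  rw [nablaJ, Jmap, hnormal, hcross]
  module

end

/-- Formula (6): (∇_A J)A = 0 (nearly pseudo-Kähler property) and
∇_{JA}J = −J∘∇_A J on S^{2,4}. -/
theorem nablaJ_properties (n : Ca) (hn : Ca.re n = 0) (hnn : Ca.bil n n = 1)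
    (A B : Ca) (hA : Ca.re A = 0) (hB : Ca.re B = 0)
    (hAn : Ca.bil A n = 0) (hBn : Ca.bil B n = 0) :
    nablaJ n A A = 0 ∧
    nablaJ n (Jmap n A) B = -(Jmap n (nablaJ n A B)) := by
  refine ⟨nablaJ_self n hA, ?_⟩
  rw [nablaJ_Jmap hn hnn hA hB hAn hBn, Jmap_nablaJ hn]
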